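/- Let T : M → M be any mapping. Then T commutes with the probability distortion T_d for every distortion function d (i.e., T ∘ T_d = T_d ∘ T for all d ∈ F_D) if and only if there exists a utility function u ∈ F_U (increasing and continuous) such that T = T^u. -/

import Mathlib

/-!
A cdf is determined by its left quantiles, and distortions only move quantiles around: if the
up-set `{t ∈ [0, 1] | p ≤ d t}` is `[s, 1]` (resp. `(s, 1]`), then the left `p`-quantile of `T_d F`
is the left (resp. right) `s`-quantile of `F`. In particular, distorting `F` by `1_[s, 1]` or
`1_(s, 1]` produces the point mass at its left or right `s`-quantile.

Hence `T` commutes with distortions precisely when it acts on left and right quantiles through a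
single function `u`, read off from `T δ_a = δ_{u a}`. For the uniform cdf `F` on an interval this
says that `u ∘ F⁻¹` is the quantile function of `T F`, so that `u` is increasing; and `u` is
continuous because the left and right quantiles of `F`, hence those of `T F`, coincide. Finally
`T^u` acts on quantiles through `u` as well, so that `T = T^u`.
-/

open MeasureTheory Filter Topology Set

noncomputable section

/-- The set of cdfs of compactly supported probability distributions on ℝ:
increasing, right-continuous, equal to `0` for all sufficiently small `x` and
equal to `1` for all sufficiently large `x`. -/
def mSet : Set (ℝ → ℝ) :=
  {F | Monotone F ∧ (∀ x, ContinuousWithinAt F (Set.Ici x) x) ∧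
    (∃ a, ∀ x ≤ a, F x = 0) ∧ (∃ b, ∀ x, b ≤ x → F x = 1)}

/-- The set of cdfs of all probability distributions on ℝ: increasing,
right-continuous, with limit `0` at `-∞` and limit `1` at `+∞`. -/
def m0Set : Set (ℝ → ℝ) :=
  {F | Monotone F ∧ (∀ x, ContinuousWithinAt F (Set.Ici x) x) ∧
    Tendsto F atBot (𝓝 0) ∧ Tendsto F atTop (𝓝 1)}

/-- A utility function: increasing (non-strict) and continuous. -/
def IsUF (u : ℝ → ℝ) : Prop := Monotone u ∧ Continuous u

/-- An increasing and left-continuous function on ℝ. -/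
def IsLeftCtsIncr (u : ℝ → ℝ) : Prop :=
  Monotone u ∧ ∀ x, ContinuousWithinAt u (Set.Iic x) x

/-- A distortion function: an increasing function `d : [0,1] → [0,1]` with
`d 0 = 0` and `d 1 = 1` (values outside `[0,1]` are irrelevant). -/
def IsDF (d : ℝ → ℝ) : Prop :=
  MonotoneOn d (Set.Icc 0 1) ∧ d 0 = 0 ∧ d 1 = 1

/-- Right-continuity of a distortion function on `[0,1)`. -/
def DFRightCts (d : ℝ → ℝ) : Prop :=
  ∀ x ∈ Set.Ico (0:ℝ) 1, ContinuousWithinAt d (Set.Ioi x) x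

/-- A distortion function with moreover `d(0+) = 0` and `d(1-) = 1`. -/
def IsDFhat (d : ℝ → ℝ) : Prop :=
  IsDF d ∧ Tendsto d (𝓝[>] (0:ℝ)) (𝓝 0) ∧ Tendsto d (𝓝[<] (1:ℝ)) (𝓝 1)

/-- The probability distortion generated by `d`:  `T_d F x = (d ∘ F)(x+)`,
the right limit of `d ∘ F` at `x`. -/
noncomputable def distortT (d F : ℝ → ℝ) : ℝ → ℝ :=
  fun x => Function.rightLim (d ∘ F) x

/-- The utility transform `T^u`: it maps a cdf `F` to the cdf of the
pushforward under `u` of the probability measure with cdf `F`. -/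
noncomputable def utilityT (u F : ℝ → ℝ) : ℝ → ℝ := by
  classical
  exact
    if h : Monotone F ∧ ∀ x, ContinuousWithinAt F (Set.Ici x) x then
      fun x => ((StieltjesFunction.measure ⟨F, h.1, h.2⟩).map u (Set.Iic x)).toReal
    else F

/-- Left quantile `F_L^{-1}(p) = inf {x | F x ≥ p}`. -/
noncomputable def leftQ (F : ℝ → ℝ) (p : ℝ) : ℝ := sInf {x | p ≤ F x}

/-- Right quantile `F_R^{-1}(p) = inf {x | F x > p}`. -/
noncomputable def rightQ (F : ℝ → ℝ) (p : ℝ) : ℝ := sInf {x | p < F x}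

open ProbabilityTheory

section Order

variable {α β : Type*}

lemma csInf_le_iff_forall_gt_mem [ConditionallyCompleteLinearOrder α] [DenselyOrdered α]
    {S : Set α} (hS : IsUpperSet S) (hbdd : BddBelow S) (hne : S.Nonempty) {x : α} :
    sInf S ≤ x ↔ ∀ y > x, y ∈ S := by
  refine ⟨fun hx y hxy => ?_,
    fun h => le_of_forall_gt_imp_ge_of_dense fun y hy => csInf_le hbdd (h y hy)⟩
  obtain ⟨z, hz, hzy⟩ := exists_lt_of_csInf_lt hne (hx.trans_lt hxy)
  exact hS hzy.le hz

lemma le_rightLim_iff_forall_gt [LinearOrder α] [TopologicalSpace α] [OrderTopology α]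
    [DenselyOrdered α] [NoMaxOrder α] [ConditionallyCompleteLinearOrder β] [TopologicalSpace β]
    [OrderTopology β] {f : α → β} (hf : Monotone f) {c : β} {x : α} :
    c ≤ Function.rightLim f x ↔ ∀ y > x, c ≤ f y := by
  refine ⟨fun h y hxy => h.trans (hf.rightLim_le hxy), fun h => ?_⟩
  exact ge_of_tendsto (hf.tendsto_rightLim x) (eventually_mem_nhdsWithin.mono h)

lemma exists_lt_and_lt_apply [LinearOrder α] [TopologicalSpace α] [OrderTopology α]
    [DenselyOrdered α] [NoMinOrder α] [LinearOrder β] [TopologicalSpace β] [OrderTopology β]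
    {f : α → β} {a : α} {c : β} (hf : ContinuousWithinAt f (Iic a) a) (h : c < f a) :
    ∃ x < a, c < f x := by
  have hlt : ∀ᶠ x in 𝓝[<] a, c < f x := (hf.mono Iio_subset_Iic_self).eventually (lt_mem_nhds h)
  obtain ⟨x, hx, hxa⟩ := (hlt.and eventually_mem_nhdsWithin).exists
  exact ⟨x, hxa, hx⟩

lemma exists_gt_and_apply_lt [LinearOrder α] [TopologicalSpace α] [OrderTopology α]
    [DenselyOrdered α] [NoMaxOrder α] [LinearOrder β] [TopologicalSpace β] [OrderTopology β]
    {f : α → β} {a : α} {c : β} (hf : ContinuousWithinAt f (Ici a) a) (h : f a < c) :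
    ∃ x > a, f x < c :=
  exists_lt_and_lt_apply (α := αᵒᵈ) (β := βᵒᵈ) hf h

lemma monotone_indicator_one [Preorder α] {s : Set α} (hs : IsUpperSet s) :
    Monotone (s.indicator (1 : α → ℝ)) := fun x y hxy => by
  by_cases hx : x ∈ s
  · rw [indicator_of_mem hx, indicator_of_mem (hs hxy hx), Pi.one_apply, Pi.one_apply]
  · rw [indicator_of_notMem hx]
    exact indicator_nonneg (fun _ _ => zero_le_one) y

lemma le_indicator_one_iff {s : Set α} {p : ℝ} {x : α} (hp : p ∈ Ioc 0 1) :
    p ≤ s.indicator 1 x ↔ x ∈ s := by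
  by_cases hx : x ∈ s <;> simp [hx, hp.1, hp.2]

end Order

section Cdf

variable {F G : ℝ → ℝ} {p x : ℝ}

lemma mem_Icc_of_mem_mSet (hF : F ∈ mSet) (x : ℝ) : F x ∈ Icc 0 1 := by
  obtain ⟨hmono, -, ⟨a, ha⟩, ⟨b, hb⟩⟩ := hF
  constructor
  · exact (ha _ (min_le_left a x)).symm.trans_le (hmono (min_le_right a x))
  · exact (hmono (le_max_right b x)).trans_eq (hb _ (le_max_left b x))

lemma rightLim_eq_self_of_mem_mSet (hF : F ∈ mSet) (x : ℝ) : Function.rightLim F x = F x :=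
  (hF.2.1 x).rightLim_eq

lemma rightQ_le_iff (hF : F ∈ mSet) (hp : p ∈ Ico 0 1) : rightQ F p ≤ x ↔ ∀ y > x, p < F y := by
  obtain ⟨hmono, -, ⟨a, ha⟩, ⟨b, hb⟩⟩ := hF
  refine csInf_le_iff_forall_gt_mem (fun y z hyz hy => lt_of_lt_of_le hy (hmono hyz))
    ⟨a, fun y (hy : p < F y) => ?_⟩ ⟨b, lt_of_lt_of_eq hp.2 (hb b le_rfl).symm⟩
  by_contra! hya
  exact (hp.1.trans_lt hy).ne' (ha y hya.le)

lemma leftQ_le_iff (hF : F ∈ mSet) (hp : p ∈ Ioc 0 1) : leftQ F p ≤ x ↔ p ≤ F x := by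
  rw [← rightLim_eq_self_of_mem_mSet hF, le_rightLim_iff_forall_gt hF.1]
  obtain ⟨hmono, -, ⟨a, ha⟩, ⟨b, hb⟩⟩ := hF
  refine csInf_le_iff_forall_gt_mem (fun y z hyz hy => le_trans hy (hmono hyz))
    ⟨a, fun y (hy : p ≤ F y) => ?_⟩ ⟨b, le_of_le_of_eq hp.2 (hb b le_rfl).symm⟩
  by_contra! hya
  exact (hp.1.trans_le hy).ne' (ha y hya.le)

lemma monotoneOn_leftQ (hF : F ∈ mSet) : MonotoneOn (leftQ F) (Ioc 0 1) := fun _ hp _ hq hpq =>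
  (leftQ_le_iff hF hp).2 (hpq.trans ((leftQ_le_iff hF hq).1 le_rfl))

lemma le_of_leftQ_le (hF : F ∈ mSet) (hG : G ∈ mSet) (h : ∀ p ∈ Ioc 0 1, leftQ G p ≤ leftQ F p) :
    F ≤ G := fun x => by
  obtain ⟨h0, h1⟩ := mem_Icc_of_mem_mSet hF x
  rcases h0.eq_or_lt with h0 | h0
  · exact h0 ▸ (mem_Icc_of_mem_mSet hG x).1
  · have hp : F x ∈ Ioc 0 1 := ⟨h0, h1⟩
    exact (leftQ_le_iff hG hp).1 ((h _ hp).trans ((leftQ_le_iff hF hp).2 le_rfl))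

lemma eq_of_leftQ_eq (hF : F ∈ mSet) (hG : G ∈ mSet) (h : ∀ p ∈ Ioc 0 1, leftQ F p = leftQ G p) :
    F = G :=
  (le_of_leftQ_le hF hG fun p hp => (h p hp).ge).antisymm
    (le_of_leftQ_le hG hF fun p hp => (h p hp).le)

lemma continuousAt_leftQ (hF : F ∈ mSet) (hp : p ∈ Ioo 0 1) (h : leftQ F p = rightQ F p) :
    ContinuousAt (leftQ F) p := by
  have mem_Ioc : ∀ᶠ q in 𝓝 p, q ∈ Ioc (0 : ℝ) 1 :=
    Ioc_mem_nhds hp.1 hp.2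
  refine tendsto_order.2 ⟨fun a ha => ?_, fun b hb => ?_⟩
  · have hFa : F a < p := by rwa [← not_le, ← leftQ_le_iff hF ⟨hp.1, hp.2.le⟩, not_le]
    filter_upwards [mem_Ioc, lt_mem_nhds hFa] with q hq hFaq
    rwa [← not_le, leftQ_le_iff hF hq, not_le]
  · obtain ⟨c, hc, hcb⟩ := exists_between hb
    have hpc : p < F c := (rightQ_le_iff hF ⟨hp.1.le, hp.2⟩).1 h.ge c hc
    filter_upwards [mem_Ioc, gt_mem_nhds hpc] with q hq hqFc
    exact ((leftQ_le_iff hF hq).2 hqFc.le).trans_lt hcb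

lemma leftQ_apply_self (hF : F ∈ mSet) (h0 : 0 < F x) (h : ∀ y < x, F y < F x) :
    leftQ F (F x) = x := by
  have hp : F x ∈ Ioc 0 1 := ⟨h0, (mem_Icc_of_mem_mSet hF x).2⟩
  refine ((leftQ_le_iff hF hp).2 le_rfl).antisymm (le_of_not_gt fun hlt => ?_)
  exact (h _ hlt).not_ge ((leftQ_le_iff hF hp).1 le_rfl)

lemma rightQ_apply_self (hF : F ∈ mSet) (h1 : F x < 1) (h : ∀ y > x, F x < F y) :
    rightQ F (F x) = x := by
  have hp : F x ∈ Ico 0 1 := ⟨(mem_Icc_of_mem_mSet hF x).1, h1⟩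
  refine ((rightQ_le_iff hF hp).2 h).antisymm (le_of_not_gt fun hlt => ?_)
  exact ((rightQ_le_iff hF hp).1 le_rfl x hlt).false

end Cdf

section PointMassUniform

variable {a b p x y : ℝ}

/-- The cdf of the point mass at `a`. -/
def pointMass (a : ℝ) : ℝ → ℝ := cdf (Measure.dirac a)

lemma pointMass_eq_indicator (a : ℝ) : pointMass a = (Ici a).indicator 1 := by
  funext x
  rw [pointMass, cdf_eq_real, Measure.real, Measure.dirac_apply]
  by_cases h : a ≤ x <;> simp [h]

lemma pointMass_mem_mSet (a : ℝ) : pointMass a ∈ mSet := by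
  refine ⟨monotone_cdf _, (cdf _).right_continuous, ⟨a - 1, fun x hx => ?_⟩, ⟨a, fun x hx => ?_⟩⟩
  · rw [pointMass_eq_indicator, indicator_of_notMem (by simp; linarith)]
  · rw [pointMass_eq_indicator, indicator_of_mem (mem_Ici.2 hx), Pi.one_apply]

lemma leftQ_pointMass (hp : p ∈ Ioc 0 1) : leftQ (pointMass a) p = a :=
  eq_of_forall_ge_iff fun x => by
    rw [leftQ_le_iff (pointMass_mem_mSet a) hp, pointMass_eq_indicator, le_indicator_one_iff hp,
      mem_Ici]

/-- The cdf of the uniform distribution on `[a, b]`, for `a < b`. -/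
def uniformCdf (a b : ℝ) : ℝ → ℝ := fun x => max 0 (min 1 ((x - a) / (b - a)))

lemma continuous_uniformCdf (a b : ℝ) : Continuous (uniformCdf a b) := by
  unfold uniformCdf
  fun_prop

lemma uniformCdf_mem_mSet (hab : a < b) : uniformCdf a b ∈ mSet := by
  have hpos : 0 < b - a := sub_pos.2 hab
  refine ⟨fun x y hxy => ?_, fun x => (continuous_uniformCdf a b).continuousWithinAt,
    ⟨a, fun x hx => ?_⟩, ⟨b, fun x hx => ?_⟩⟩
  · unfold uniformCdf
    gcongr
  · have : (x - a) / (b - a) ≤ 0 := div_nonpos_of_nonpos_of_nonneg (sub_nonpos.2 hx) hpos.le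
    exact max_eq_left ((min_le_right _ _).trans this)
  · have : 1 ≤ (x - a) / (b - a) := (one_le_div hpos).2 (by linarith)
    rw [uniformCdf, min_eq_left this, max_eq_right zero_le_one]

lemma uniformCdf_lt_uniformCdf (hab : a < b) (hay : a < y) (hxb : x < b) (hxy : x < y) :
    uniformCdf a b x < uniformCdf a b y := by
  have hpos : 0 < b - a := sub_pos.2 hab
  have hx : (x - a) / (b - a) < 1 := (div_lt_one hpos).2 (by linarith)
  have hy : 0 < (y - a) / (b - a) := div_pos (sub_pos.2 hay) hpos
  have hlt : (x - a) / (b - a) < (y - a) / (b - a) := by gcongr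
  exact max_lt (lt_max_of_lt_right (lt_min one_pos hy))
    (lt_max_of_lt_right (lt_min ((min_le_right _ _).trans_lt hx)
      ((min_le_right _ _).trans_lt hlt)))

lemma uniformCdf_pos (hab : a < b) (hax : a < x) : 0 < uniformCdf a b x :=
  (mem_Icc_of_mem_mSet (uniformCdf_mem_mSet hab) a).1.trans_lt
    (uniformCdf_lt_uniformCdf hab hax hab hax)

lemma uniformCdf_lt_one (hab : a < b) (hxb : x < b) : uniformCdf a b x < 1 :=
  (uniformCdf_lt_uniformCdf hab hab hxb hxb).trans_le
    (mem_Icc_of_mem_mSet (uniformCdf_mem_mSet hab) b).2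

lemma leftQ_uniformCdf (hx : x ∈ Ioc a b) : leftQ (uniformCdf a b) (uniformCdf a b x) = x := by
  have hab : a < b := hx.1.trans_le hx.2
  exact leftQ_apply_self (uniformCdf_mem_mSet hab) (uniformCdf_pos hab hx.1) fun y hyx =>
    uniformCdf_lt_uniformCdf hab hx.1 (hyx.trans_le hx.2) hyx

lemma rightQ_uniformCdf (hx : x ∈ Ico a b) : rightQ (uniformCdf a b) (uniformCdf a b x) = x := by
  have hab : a < b := hx.1.trans_lt hx.2
  exact rightQ_apply_self (uniformCdf_mem_mSet hab) (uniformCdf_lt_one hab hx.2) fun y hxy =>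
    uniformCdf_lt_uniformCdf hab (hx.1.trans_lt hxy) hx.2 hxy

end PointMassUniform

section Distortion

variable {d F : ℝ → ℝ} {p s : ℝ}

lemma isDF_indicator {S : Set ℝ} (hS : IsUpperSet S) (h0 : 0 ∉ S) (h1 : 1 ∈ S) :
    IsDF (S.indicator 1) :=
  ⟨(monotone_indicator_one hS).monotoneOn _, indicator_of_notMem h0 _, indicator_of_mem h1 _⟩

lemma IsDF.monotone_comp (hd : IsDF d) (hF : F ∈ mSet) : Monotone (d ∘ F) := fun x y hxy =>
  hd.1 (mem_Icc_of_mem_mSet hF x) (mem_Icc_of_mem_mSet hF y) (hF.1 hxy)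

lemma distortT_mem_mSet (hd : IsDF d) (hF : F ∈ mSet) : distortT d F ∈ mSet := by
  have hmono := hd.monotone_comp hF
  obtain ⟨a, ha⟩ := hF.2.2.1
  obtain ⟨b, hb⟩ := hF.2.2.2
  have eq_zero : ∀ x ≤ a, (d ∘ F) x = 0 := fun x hx => by simp only [Function.comp, ha x hx, hd.2.1]
  have eq_one : ∀ x, b ≤ x → (d ∘ F) x = 1 := fun x hx => by
    simp only [Function.comp, hb x hx, hd.2.2]
  refine ⟨hmono.rightLim, hmono.stieltjesFunction.right_continuous, ⟨a - 1, fun x hx => ?_⟩,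
    ⟨b, fun x hx => ?_⟩⟩
  · have hxa : x < a := by linarith
    exact ((hmono.rightLim_le hxa).trans_eq (eq_zero a le_rfl)).antisymm
      ((eq_zero x hxa.le).symm.trans_le (hmono.le_rightLim le_rfl))
  · have hxx : x < x + 1 := lt_add_one x
    exact ((hmono.rightLim_le hxx).trans_eq (eq_one _ (hx.trans hxx.le))).antisymm
      ((eq_one x hx).symm.trans_le (hmono.le_rightLim le_rfl))

lemma leftQ_distortT_le_iff (hd : IsDF d) (hF : F ∈ mSet) (hp : p ∈ Ioc 0 1) {x : ℝ} :
    leftQ (distortT d F) p ≤ x ↔ ∀ y > x, p ≤ d (F y) := by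
  rw [leftQ_le_iff (distortT_mem_mSet hd hF) hp]
  exact le_rightLim_iff_forall_gt (hd.monotone_comp hF)

lemma leftQ_distortT_eq_leftQ (hd : IsDF d) (hF : F ∈ mSet) (hp : p ∈ Ioc 0 1) (hs : s ∈ Ioc 0 1)
    (h : ∀ t ∈ Icc 0 1, p ≤ d t ↔ s ≤ t) : leftQ (distortT d F) p = leftQ F s :=
  eq_of_forall_ge_iff fun x => by
    simp only [leftQ_distortT_le_iff hd hF hp, h _ (mem_Icc_of_mem_mSet hF _),
      ← leftQ_le_iff hF hs, forall_gt_imp_ge_iff_le_of_dense, gt_iff_lt]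

lemma leftQ_distortT_eq_rightQ (hd : IsDF d) (hF : F ∈ mSet) (hp : p ∈ Ioc 0 1)
    (hs : s ∈ Ico 0 1) (h : ∀ t ∈ Icc 0 1, p ≤ d t ↔ s < t) :
    leftQ (distortT d F) p = rightQ F s :=
  eq_of_forall_ge_iff fun x => by
    simp only [leftQ_distortT_le_iff hd hF hp, h _ (mem_Icc_of_mem_mSet hF _),
      rightQ_le_iff hF hs]

lemma IsDF.exists_threshold (hd : IsDF d) (hp : p ∈ Ioc 0 1) :
    (∃ s ∈ Ioc (0 : ℝ) 1, ∀ t ∈ Icc 0 1, p ≤ d t ↔ s ≤ t) ∨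
      ∃ s ∈ Ico (0 : ℝ) 1, ∀ t ∈ Icc 0 1, p ≤ d t ↔ s < t := by
  obtain ⟨hmono, hd0, hd1⟩ := hd
  let S : Set ℝ := {t ∈ Icc 0 1 | p ≤ d t}
  have h1S : 1 ∈ S := ⟨right_mem_Icc.2 zero_le_one, hp.2.trans_eq hd1.symm⟩
  have hbdd : BddBelow S := ⟨0, fun t ht => ht.1.1⟩
  have hs : sInf S ∈ Icc 0 1 := ⟨le_csInf ⟨1, h1S⟩ fun t ht => ht.1.1, csInf_le hbdd h1S⟩
  have le_of_lt : ∀ t ∈ Icc 0 1, sInf S < t → p ≤ d t := fun t ht hst => by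
    obtain ⟨r, hr, hrt⟩ := exists_lt_of_csInf_lt ⟨1, h1S⟩ hst
    exact hr.2.trans (hmono hr.1 ht hrt.le)
  by_cases hps : p ≤ d (sInf S)
  · refine .inl ⟨sInf S, ⟨hs.1.lt_of_ne fun h => ?_, hs.2⟩, fun t ht =>
      ⟨fun h => csInf_le hbdd ⟨ht, h⟩, fun h => hps.trans (hmono hs ht h)⟩⟩
    rw [← h, hd0] at hps
    exact hp.1.not_ge hps
  · refine .inr ⟨sInf S, ⟨hs.1, hs.2.lt_of_ne fun h => ?_⟩, fun t ht =>
      ⟨fun h => (csInf_le hbdd ⟨ht, h⟩).lt_of_ne fun hst => hps (hst ▸ h), le_of_lt t ht⟩⟩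
    exact hps (h ▸ h1S.2)

lemma distortT_indicator_Ici (hF : F ∈ mSet) (hs : s ∈ Ioc 0 1) :
    distortT ((Ici s).indicator 1) F = pointMass (leftQ F s) := by
  have hd : IsDF ((Ici s).indicator 1) := isDF_indicator (isUpperSet_Ici s) hs.1.not_ge hs.2
  refine eq_of_leftQ_eq (distortT_mem_mSet hd hF) (pointMass_mem_mSet _) fun p hp => ?_
  rw [leftQ_pointMass hp, leftQ_distortT_eq_leftQ hd hF hp hs fun t _ => le_indicator_one_iff hp]

lemma distortT_indicator_Ioi (hF : F ∈ mSet) (hs : s ∈ Ico 0 1) :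
    distortT ((Ioi s).indicator 1) F = pointMass (rightQ F s) := by
  have hd : IsDF ((Ioi s).indicator 1) := isDF_indicator (isUpperSet_Ioi s) hs.1.not_gt hs.2
  refine eq_of_leftQ_eq (distortT_mem_mSet hd hF) (pointMass_mem_mSet _) fun p hp => ?_
  rw [leftQ_pointMass hp, leftQ_distortT_eq_rightQ hd hF hp hs fun t _ => le_indicator_one_iff hp]

end Distortion

section Utility

variable {u F : ℝ → ℝ} {a p x : ℝ}

lemma cdf_map_apply {μ : Measure ℝ} [IsProbabilityMeasure μ] (hu : Measurable u) (x : ℝ) :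
    cdf (μ.map u) x = μ.real (u ⁻¹' Iic x) := by
  have := Measure.isProbabilityMeasure_map (μ := μ) hu.aemeasurable
  rw [cdf_eq_real, map_measureReal_apply hu measurableSet_Iic]

lemma exists_cdf_eq_of_mem_mSet (hF : F ∈ mSet) :
    ∃ μ : Measure ℝ, IsProbabilityMeasure μ ∧ cdf μ = F ∧
      ∀ u, Measurable u → utilityT u F = cdf (μ.map u) := by
  obtain ⟨hmono, hcont, ⟨a, ha⟩, ⟨b, hb⟩⟩ := id hF
  let f : StieltjesFunction ℝ := ⟨F, hmono, hcont⟩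
  have tendsto_zero : Tendsto f atBot (𝓝 0) :=
    tendsto_const_nhds.congr' ((eventually_le_atBot a).mono fun x hx => (ha x hx).symm)
  have tendsto_one : Tendsto f atTop (𝓝 1) :=
    tendsto_const_nhds.congr' ((eventually_ge_atTop b).mono fun x hx => (hb x hx).symm)
  have : IsProbabilityMeasure f.measure :=
    ⟨by rw [f.measure_univ tendsto_zero tendsto_one, sub_zero, ENNReal.ofReal_one]⟩
  refine ⟨f.measure, this, ?_, fun u hu => funext fun x => ?_⟩
  · rw [cdf_measure_stieltjesFunction f tendsto_zero tendsto_one]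
  · rw [cdf_map_apply hu, utilityT, dif_pos ⟨hmono, hcont⟩, Measure.map_apply hu measurableSet_Iic,
      Measure.real]

lemma le_utilityT (hF : F ∈ mSet) (hu : Monotone u) (h : u a ≤ x) : F a ≤ utilityT u F x := by
  obtain ⟨μ, _, rfl, hμ⟩ := exists_cdf_eq_of_mem_mSet hF
  rw [hμ u hu.measurable, cdf_map_apply hu.measurable, cdf_eq_real]
  exact measureReal_mono fun z hz => (hu hz).trans h

lemma utilityT_le (hF : F ∈ mSet) (hu : Monotone u) (h : x < u a) : utilityT u F x ≤ F a := by
  obtain ⟨μ, _, rfl, hμ⟩ := exists_cdf_eq_of_mem_mSet hF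
  rw [hμ u hu.measurable, cdf_map_apply hu.measurable, cdf_eq_real]
  exact measureReal_mono fun z hz => (hu.reflect_lt (lt_of_le_of_lt hz h)).le

lemma utilityT_mem_mSet (hF : F ∈ mSet) (hu : Monotone u) : utilityT u F ∈ mSet := by
  obtain ⟨μ, _, -, hμ⟩ := exists_cdf_eq_of_mem_mSet hF
  obtain ⟨a, ha⟩ := hF.2.2.1
  obtain ⟨b, hb⟩ := hF.2.2.2
  have hν : utilityT u F = cdf (μ.map u) := hμ u hu.measurable
  refine ⟨hν ▸ monotone_cdf _, hν ▸ (cdf _).right_continuous, ⟨u a - 1, fun x hx => ?_⟩,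
    ⟨u b, fun x hx => ?_⟩⟩
  · have hxa : x < u a := by linarith
    exact ((utilityT_le hF hu hxa).trans_eq (ha a le_rfl)).antisymm (hν ▸ cdf_nonneg _ x)
  · exact (hν ▸ cdf_le_one _ x : utilityT u F x ≤ 1).antisymm
      ((hb b le_rfl).symm.trans_le (le_utilityT hF hu hx))

lemma leftQ_utilityT (hF : F ∈ mSet) (hu : IsLeftCtsIncr u) (hp : p ∈ Ioc 0 1) :
    leftQ (utilityT u F) p = u (leftQ F p) := by
  refine eq_of_forall_ge_iff fun x => ?_
  rw [leftQ_le_iff (utilityT_mem_mSet hF hu.1) hp]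
  refine ⟨fun h => ?_, fun h => ((leftQ_le_iff hF hp).1 le_rfl).trans (le_utilityT hF hu.1 h)⟩
  by_contra! hlt
  obtain ⟨z, hz, hxz⟩ := exists_lt_and_lt_apply (hu.2 _) hlt
  exact hz.not_ge ((leftQ_le_iff hF hp).2 (h.trans (utilityT_le hF hu.1 hxz)))

lemma rightQ_utilityT (hF : F ∈ mSet) (hu : IsUF u) (hp : p ∈ Ico 0 1) :
    rightQ (utilityT u F) p = u (rightQ F p) := by
  refine eq_of_forall_ge_iff fun x => ?_
  rw [rightQ_le_iff (utilityT_mem_mSet hF hu.1) hp]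
  constructor
  · intro h
    by_contra! hlt
    obtain ⟨y, hxy, hy⟩ := exists_between hlt
    obtain ⟨z, hz, hyz⟩ := exists_lt_and_lt_apply hu.2.continuousWithinAt hy
    have hpz : p < F z := (h y hxy).trans_le (utilityT_le hF hu.1 hyz)
    exact hz.not_ge ((rightQ_le_iff hF hp).2 fun w hzw => hpz.trans_le (hF.1 hzw.le))
  · intro h y hxy
    obtain ⟨z, hz, hzy⟩ := exists_gt_and_apply_lt hu.2.continuousWithinAt (h.trans_lt hxy)
    exact ((rightQ_le_iff hF hp).1 le_rfl z hz).trans_le (le_utilityT hF hu.1 hzy.le)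

end Utility

section QuantileAction

variable {T T' : (ℝ → ℝ) → ℝ → ℝ} {u d F : ℝ → ℝ}

/-- `T` maps `M` to itself and transforms both the left and the right quantiles of a distribution by
the function `u`. This is the property through which commuting with distortions and being a utility
transform are compared. -/
structure ActsOnQuantiles (T : (ℝ → ℝ) → ℝ → ℝ) (u : ℝ → ℝ) : Prop where
  mem_mSet : ∀ F ∈ mSet, T F ∈ mSet
  leftQ_eq : ∀ F ∈ mSet, ∀ p ∈ Ioc 0 1, leftQ (T F) p = u (leftQ F p)
  rightQ_eq : ∀ F ∈ mSet, ∀ p ∈ Ico 0 1, rightQ (T F) p = u (rightQ F p)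

namespace ActsOnQuantiles

lemma eqOn (hT : ActsOnQuantiles T u) (hT' : ActsOnQuantiles T' u) : EqOn T T' mSet :=
  fun F hF => eq_of_leftQ_eq (hT.mem_mSet F hF) (hT'.mem_mSet F hF) fun p hp =>
    (hT.leftQ_eq F hF p hp).trans (hT'.leftQ_eq F hF p hp).symm

lemma congr (hT : ActsOnQuantiles T u) (h : EqOn T' T mSet) : ActsOnQuantiles T' u where
  mem_mSet F hF := h hF ▸ hT.mem_mSet F hF
  leftQ_eq F hF := h hF ▸ hT.leftQ_eq F hF
  rightQ_eq F hF := h hF ▸ hT.rightQ_eq F hF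

lemma distortT_comm (hT : ActsOnQuantiles T u) (hd : IsDF d) (hF : F ∈ mSet) :
    T (distortT d F) = distortT d (T F) := by
  have hdF := distortT_mem_mSet hd hF
  have hTF := hT.mem_mSet F hF
  refine eq_of_leftQ_eq (hT.mem_mSet _ hdF) (distortT_mem_mSet hd hTF) fun p hp => ?_
  rw [hT.leftQ_eq _ hdF p hp]
  rcases hd.exists_threshold hp with ⟨s, hs, h⟩ | ⟨s, hs, h⟩
  · rw [leftQ_distortT_eq_leftQ hd hF hp hs h, leftQ_distortT_eq_leftQ hd hTF hp hs h,
      hT.leftQ_eq F hF s hs]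
  · rw [leftQ_distortT_eq_rightQ hd hF hp hs h, leftQ_distortT_eq_rightQ hd hTF hp hs h,
      hT.rightQ_eq F hF s hs]

lemma leftQ_apply_uniformCdf (hT : ActsOnQuantiles T u) {a b x : ℝ} (hx : x ∈ Ioc a b) :
    leftQ (T (uniformCdf a b)) (uniformCdf a b x) = u x := by
  have hab : a < b := hx.1.trans_le hx.2
  have hF := uniformCdf_mem_mSet hab
  rw [hT.leftQ_eq _ hF _ ⟨uniformCdf_pos hab hx.1, (mem_Icc_of_mem_mSet hF x).2⟩,
    leftQ_uniformCdf hx]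

lemma rightQ_apply_uniformCdf (hT : ActsOnQuantiles T u) {a b x : ℝ} (hx : x ∈ Ico a b) :
    rightQ (T (uniformCdf a b)) (uniformCdf a b x) = u x := by
  have hab : a < b := hx.1.trans_lt hx.2
  have hF := uniformCdf_mem_mSet hab
  rw [hT.rightQ_eq _ hF _ ⟨(mem_Icc_of_mem_mSet hF x).1, uniformCdf_lt_one hab hx.2⟩,
    rightQ_uniformCdf hx]

lemma monotone (hT : ActsOnQuantiles T u) : Monotone u := fun x y hxy => by
  have hx : x ∈ Ioc (x - 1) y := ⟨sub_one_lt x, hxy⟩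
  have hy : y ∈ Ioc (x - 1) y := ⟨hx.1.trans_le hxy, le_rfl⟩
  have hF := uniformCdf_mem_mSet hy.1
  have hmem {z : ℝ} (hz : z ∈ Ioc (x - 1) y) : uniformCdf (x - 1) y z ∈ Ioc 0 1 :=
    ⟨uniformCdf_pos hy.1 hz.1, (mem_Icc_of_mem_mSet hF z).2⟩
  rw [← hT.leftQ_apply_uniformCdf hx, ← hT.leftQ_apply_uniformCdf hy]
  exact monotoneOn_leftQ (hT.mem_mSet _ hF) (hmem hx) (hmem hy) (hF.1 hxy)

lemma continuous (hT : ActsOnQuantiles T u) : Continuous u := by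
  refine continuous_iff_continuousAt.2 fun c => ?_
  have hc : c ∈ Ioo (c - 1) (c + 1) := ⟨sub_one_lt c, lt_add_one c⟩
  let F := uniformCdf (c - 1) (c + 1)
  have hab : c - 1 < c + 1 := hc.1.trans hc.2
  have hTF : T F ∈ mSet := hT.mem_mSet _ (uniformCdf_mem_mSet hab)
  have hp : F c ∈ Ioo 0 1 := ⟨uniformCdf_pos hab hc.1, uniformCdf_lt_one hab hc.2⟩
  have hQ : leftQ (T F) (F c) = rightQ (T F) (F c) := by
    rw [hT.leftQ_apply_uniformCdf (Ioo_subset_Ioc_self hc),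
      hT.rightQ_apply_uniformCdf (Ioo_subset_Ico_self hc)]
  have hu : leftQ (T F) ∘ F =ᶠ[𝓝 c] u := by
    filter_upwards [Ioo_mem_nhds hc.1 hc.2] with x hx
    exact hT.leftQ_apply_uniformCdf (Ioo_subset_Ioc_self hx)
  exact ((continuousAt_leftQ hTF hp hQ).comp (continuous_uniformCdf _ _).continuousAt).congr hu

end ActsOnQuantiles

lemma IsUF.actsOnQuantiles_utilityT (hu : IsUF u) : ActsOnQuantiles (utilityT u) u where
  mem_mSet _ hF := utilityT_mem_mSet hF hu.1
  leftQ_eq _ hF _ hp := leftQ_utilityT hF ⟨hu.1, fun _ => hu.2.continuousWithinAt⟩ hp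
  rightQ_eq _ hF _ hp := rightQ_utilityT hF hu hp

/-- The function `u` with `T δ_a = δ_{u a}`, provided that `T` maps point masses to point masses;
it is the candidate utility function of `T`. -/
def inducedUtility (T : (ℝ → ℝ) → ℝ → ℝ) (a : ℝ) : ℝ := leftQ (T (pointMass a)) 1

lemma inducedUtility_eq {a b : ℝ} (h : T (pointMass a) = pointMass b) : inducedUtility T a = b := by
  rw [inducedUtility, h, leftQ_pointMass ⟨one_pos, le_rfl⟩]

lemma actsOnQuantiles_inducedUtility (hT : ∀ F ∈ mSet, T F ∈ mSet)
    (hcomm : ∀ S : Set ℝ, IsUpperSet S → 0 ∉ S → 1 ∈ S → ∀ F ∈ mSet,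
      T (distortT (S.indicator 1) F) = distortT (S.indicator 1) (T F)) :
    ActsOnQuantiles T (inducedUtility T) where
  mem_mSet := hT
  leftQ_eq F hF p hp := by
    have h := hcomm (Ici p) (isUpperSet_Ici p) hp.1.not_ge hp.2 F hF
    rw [distortT_indicator_Ici hF hp, distortT_indicator_Ici (hT F hF) hp] at h
    exact (inducedUtility_eq h).symm
  rightQ_eq F hF p hp := by
    have h := hcomm (Ioi p) (isUpperSet_Ioi p) hp.1.not_gt hp.2 F hF
    rw [distortT_indicator_Ioi hF hp, distortT_indicator_Ioi (hT F hF) hp] at h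
    exact (inducedUtility_eq h).symm

end QuantileAction

theorem stmt2_general (T : (ℝ → ℝ) → ℝ → ℝ) (hT : ∀ F ∈ mSet, T F ∈ mSet) :
    List.TFAE [
      ∀ d : ℝ → ℝ, IsDF d → ∀ F ∈ mSet, T (distortT d F) = distortT d (T F),
      ∀ S : Set ℝ, IsUpperSet S → 0 ∉ S → 1 ∈ S → ∀ F ∈ mSet,
        T (distortT (S.indicator 1) F) = distortT (S.indicator 1) (T F),
      ∃ u : ℝ → ℝ, IsUF u ∧ ∀ F ∈ mSet, T F = utilityT u F] := by
  tfae_have 1 → 2 := fun h S hS h0 h1 => h _ (isDF_indicator hS h0 h1)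
  tfae_have 2 → 3 := fun h => by
    have hact := actsOnQuantiles_inducedUtility hT h
    have hu : IsUF (inducedUtility T) := ⟨hact.monotone, hact.continuous⟩
    exact ⟨inducedUtility T, hu, hact.eqOn hu.actsOnQuantiles_utilityT⟩
  tfae_have 3 → 1 := fun ⟨u, hu, h⟩ d hd F hF =>
    (hu.actsOnQuantiles_utilityT.congr h).distortT_comm hd hF
  tfae_finish

/-- A map `T : M → M` commutes with the probability distortion `T_d` for every
distortion function `d` if and only if `T = T^u` for some utility function `u`
(increasing and continuous). -/
theorem stmt2 (T : (ℝ → ℝ) → ℝ → ℝ) (hT : ∀ F ∈ mSet, T F ∈ mSet) :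
    (∀ d : ℝ → ℝ, IsDF d → ∀ F ∈ mSet, T (distortT d F) = distortT d (T F)) ↔
      ∃ u : ℝ → ℝ, IsUF u ∧ ∀ F ∈ mSet, T F = utilityT u F :=
  (stmt2_general T hT).out 0 2
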